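/- arXiv:1611.07489 — 4 statements merged into one kernel-verified Lean document; each statement's English description precedes it below -/
import Mathlib

section
/- Weak duality between the Hajiaghayi–Jain dual and integral primal solutions: let (y,λ) be HJ-feasible, let b ≥ 0 be a real number, and let (F,R) be cut-feasible with |R| ≤ b. Then Σ_{S ⊆ V} y_S − b·λ ≤ Σ_{e ∈ F} c_e. -/
open Finset

namespace KForest1

variable {V : Type*}

/-- `S ⊙ i`: exactly one of the endpoints `a`, `b` lies in `S`. -/
def Separates [DecidableEq V] (a b : V) (S : Finset V) : Prop :=
  (a ∈ S ∧ b ∉ S) ∨ (a ∉ S ∧ b ∈ S)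

instance [DecidableEq V] (a b : V) (S : Finset V) : Decidable (Separates a b S) := by
  unfold Separates; infer_instance

/-- `e ∈ δ(S)`: the edge `e` has exactly one endpoint in `S`. -/
def InCut [DecidableEq V] (S : Finset V) (e : Sym2 V) : Prop :=
  ∃ u, u ∈ S ∧ ∃ v, v ∉ S ∧ e = s(u, v)

instance [Fintype V] [DecidableEq V] (S : Finset V) (e : Sym2 V) :
    Decidable (InCut S e) := by
  unfold InCut; infer_instance

/-!
Split the sets `S` according to whether some edge of `F` crosses them. The dual weight of the
crossed sets is paid for by the edge constraints, since each such set is counted by at least one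
edge of `F`. By cut-feasibility the uncrossed sets separate only demands in `R`, so the family
constraint for the family of all of them bounds their dual weight by `λ |R| ≤ b λ`.
-/

section Incidence

variable {α ε ι M : Type*}

lemma sum_filter_exists_le_sum_sum_filter [AddCommMonoid M] [PartialOrder M] [IsOrderedAddMonoid M]
    (r : α → ε → Prop) [∀ a e, Decidable (r a e)] {A : Finset α} {w : α → M}
    (hw : ∀ a ∈ A, 0 ≤ w a) (F : Finset ε) :
    ∑ a ∈ A with ∃ e ∈ F, r a e, w a ≤ ∑ e ∈ F, ∑ a ∈ A with r a e, w a := by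
  simp only [sum_filter]
  rw [sum_comm]
  refine sum_le_sum fun a ha => ?_
  have hnonneg : ∀ e ∈ F, 0 ≤ if r a e then w a else 0 := fun _ _ =>
    ite_nonneg (hw a ha) le_rfl
  split_ifs with h
  · obtain ⟨e, he, hr⟩ := h
    calc w a = if r a e then w a else 0 := (if_pos hr).symm
      _ ≤ ∑ e ∈ F, if r a e then w a else 0 :=
        single_le_sum (f := fun e => if r a e then w a else 0) hnonneg he
  · exact sum_nonneg hnonneg

lemma sum_le_mul_card_of_forall_sep_mem [Fintype ι] [Semiring M] [PartialOrder M]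
    [IsOrderedRing M] (sep : α → ι → Prop) [∀ a i, Decidable (sep a i)] {B : Finset α}
    {R : Finset ι} {y : α → M} {lam : M} (hlam : 0 ≤ lam)
    (hB : ∑ a ∈ B, y a ≤ lam * #{i | ∃ a ∈ B, sep a i}) (hsep : ∀ a ∈ B, ∀ i, sep a i → i ∈ R) :
    ∑ a ∈ B, y a ≤ lam * #R := by
  have hsubset : ({i | ∃ a ∈ B, sep a i} : Finset ι) ⊆ R := fun i hi => by
    obtain ⟨a, ha, hai⟩ := (mem_filter_univ i).mp hi
    exact hsep a ha i hai
  exact hB.trans (by gcongr)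

/-- The graph enters only through two incidence relations: `crosses a e` stands for `e ∈ δ(a)` and
`sep a i` for `a ⊙ i`. -/
theorem weak_duality_HJ_dual_general [Fintype ι] [CommSemiring M] [PartialOrder M]
    [IsOrderedRing M] (crosses : α → ε → Prop) [∀ a e, Decidable (crosses a e)]
    (sep : α → ι → Prop) [∀ a i, Decidable (sep a i)]
    {A : Finset α} {F : Finset ε} {R : Finset ι} {y : α → M} {c : ε → M} {lam b : M}
    (hy : ∀ a ∈ A, 0 ≤ y a) (hlam : 0 ≤ lam)
    (hedge : ∀ e ∈ F, ∑ a ∈ A with crosses a e, y a ≤ c e)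
    (hfam : ∀ B ⊆ A, ∑ a ∈ B, y a ≤ lam * #{i | ∃ a ∈ B, sep a i})
    (hR : (#R : M) ≤ b)
    (hcut : ∀ i ∉ R, ∀ a ∈ A, sep a i → ∃ e ∈ F, crosses a e) :
    ∑ a ∈ A, y a ≤ ∑ e ∈ F, c e + b * lam := by
  have hcrossed : ∑ a ∈ A with ∃ e ∈ F, crosses a e, y a ≤ ∑ e ∈ F, c e :=
    (sum_filter_exists_le_sum_sum_filter crosses hy F).trans (sum_le_sum hedge)
  have hsep : ∀ a ∈ A.filter (¬ ∃ e ∈ F, crosses · e), ∀ i, sep a i → i ∈ R := by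
    intro a ha i hi
    obtain ⟨haA, hnone⟩ := mem_filter.mp ha
    by_contra hiR
    exact hnone (hcut i hiR a haA hi)
  have huncrossed : ∑ a ∈ A with ¬ ∃ e ∈ F, crosses a e, y a ≤ b * lam :=
    calc ∑ a ∈ A with ¬ ∃ e ∈ F, crosses a e, y a
      _ ≤ lam * #R :=
        sum_le_mul_card_of_forall_sep_mem sep hlam (hfam _ (filter_subset _ _)) hsep
      _ ≤ lam * b := by gcongr
      _ = b * lam := mul_comm lam b
  calc ∑ a ∈ A, y a
    _ = ∑ a ∈ A with ∃ e ∈ F, crosses a e, y a + ∑ a ∈ A with ¬ ∃ e ∈ F, crosses a e, y a :=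
      (sum_filter_add_sum_filter_not A _ y).symm
    _ ≤ ∑ e ∈ F, c e + b * lam := add_le_add hcrossed huncrossed

end Incidence

/-- Weak duality between the Hajiaghayi–Jain dual and integral primal solutions:
if `(y, lam)` is HJ-feasible, `b ≥ 0`, and `(F, R)` is cut-feasible with `|R| ≤ b`,
then `∑_S y_S - b·lam ≤ ∑_{e ∈ F} c_e`. -/
theorem weak_duality_HJ_dual
    {V : Type*} [Fintype V] [DecidableEq V]
    (E : Finset (Sym2 V)) (c : Sym2 V → ℝ) (hc : ∀ e ∈ E, 0 ≤ c e)
    (m : ℕ) (s t : Fin m → V)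
    -- HJ-feasible dual solution
    (y : Finset V → ℝ) (lam : ℝ)
    (hy : ∀ S : Finset V, 0 ≤ y S) (hlam : 0 ≤ lam)
    (hedge : ∀ e ∈ E,
      ∑ S ∈ univ.filter (fun S : Finset V => InCut S e), y S ≤ c e)
    (hfam : ∀ 𝒮 : Finset (Finset V), ∑ S ∈ 𝒮, y S ≤
      lam * (univ.filter (fun i : Fin m => ∃ S ∈ 𝒮, Separates (s i) (t i) S)).card)
    -- cut-feasible integral primal solution with removal budget `b`
    (b : ℝ) (hb : 0 ≤ b)
    (F : Finset (Sym2 V)) (R : Finset (Fin m)) (hF : F ⊆ E)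
    (hR : (R.card : ℝ) ≤ b)
    (hcut : ∀ i ∉ R, ∀ S : Finset V, Separates (s i) (t i) S → ∃ e ∈ F, InCut S e) :
    (∑ S : Finset V, y S) - b * lam ≤ ∑ e ∈ F, c e := by
  exact sub_le_iff_le_add.mpr <| weak_duality_HJ_dual_general InCut
    (fun S i => Separates (s i) (t i) S) (fun S _ => hy S) hlam (fun e he => hedge e (hF he))
    (fun 𝒮 _ => hfam 𝒮) hR (fun i hi S _ => hcut i hi S)

end KForest1
end

section
/- From a D-feasible solution of the per-demand dual one obtains an HJ-feasible solution of equal objective value: if (y,λ) is D-feasible, then the pair (ŷ,λ) defined by ŷ_S = Σ_{i : S ⊙ i} y_{i,S} for each S ⊆ V is HJ-feasible, and Σ_{S ⊆ V} ŷ_S = Σ_{(i,S) : S ⊙ i} y_{i,S}. -/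
open Finset

namespace KForest3

variable {V : Type*}

/-- `S ⊙ i`: exactly one of the endpoints `a`, `b` lies in `S`. -/
def Separates [DecidableEq V] (a b : V) (S : Finset V) : Prop :=
  (a ∈ S ∧ b ∉ S) ∨ (a ∉ S ∧ b ∈ S)

instance [DecidableEq V] (a b : V) (S : Finset V) : Decidable (Separates a b S) := by
  unfold Separates; infer_instance

/-- `e ∈ δ(S)`: the edge `e` has exactly one endpoint in `S`. -/
def InCut [DecidableEq V] (S : Finset V) (e : Sym2 V) : Prop :=
  ∃ u, u ∈ S ∧ ∃ v, v ∉ S ∧ e = s(u, v)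

instance [Fintype V] [DecidableEq V] (S : Finset V) (e : Sym2 V) :
    Decidable (InCut S e) := by
  unfold InCut; infer_instance

/-- The Hajiaghayi–Jain dual feasibility conditions for `(y, lam)`. -/
def HJFeasible [Fintype V] [DecidableEq V] (E : Finset (Sym2 V)) (c : Sym2 V → ℝ)
    (m : ℕ) (s t : Fin m → V) (y : Finset V → ℝ) (lam : ℝ) : Prop :=
  (∀ S : Finset V, 0 ≤ y S) ∧ 0 ≤ lam ∧
    (∀ e ∈ E, ∑ S ∈ univ.filter (fun S : Finset V => InCut S e), y S ≤ c e) ∧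
    (∀ 𝒮 : Finset (Finset V), ∑ S ∈ 𝒮, y S ≤
      lam * (univ.filter (fun i : Fin m => ∃ S ∈ 𝒮, Separates (s i) (t i) S)).card)

section PooledDual

variable {ι σ M : Type*} [Fintype ι] {r : ι → σ → Prop} [∀ i, DecidablePred (r i)]

/-- The paper's `ŷ_S = ∑_{i : S ⊙ i} y_{i,S}`, for an arbitrary relation `r i S` in the role
of `S ⊙ i`. -/
def pooledDual [AddCommMonoid M] (r : ι → σ → Prop) [∀ i, DecidablePred (r i)]
    (y : ι → σ → M) (S : σ) : M :=
  ∑ i with r i S, y i S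

theorem sum_pooledDual [AddCommMonoid M] (y : ι → σ → M) (A : Finset σ) :
    ∑ S ∈ A, pooledDual r y S = ∑ i, ∑ S ∈ A with r i S, y i S :=
  sum_comm' fun S i => by simp

variable [AddCommMonoid M] [PartialOrder M] [IsOrderedAddMonoid M] {y : ι → σ → M}

theorem pooledDual_nonneg {S : σ} (hy : ∀ i, r i S → 0 ≤ y i S) : 0 ≤ pooledDual r y S :=
  sum_nonneg fun i hi => hy i (mem_filter_univ i |>.1 hi)

theorem sum_pooledDual_le_card_nsmul {A : Finset σ} {b : M}
    (hb : ∀ i, ∑ S ∈ A with r i S, y i S ≤ b) :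
    ∑ S ∈ A, pooledDual r y S ≤ #{i | ∃ S ∈ A, r i S} • b := by
  have related_of_ne_zero (i : ι) (hi : ∑ S ∈ A with r i S, y i S ≠ 0) : ∃ S ∈ A, r i S := by
    obtain ⟨S, hS, -⟩ := exists_ne_zero_of_sum_ne_zero hi
    exact ⟨S, mem_filter.1 hS⟩
  calc
    ∑ S ∈ A, pooledDual r y S = ∑ i, ∑ S ∈ A with r i S, y i S := sum_pooledDual y A
    _ = ∑ i with ∃ S ∈ A, r i S, ∑ S ∈ A with r i S, y i S :=
      (sum_filter_of_ne fun i _ => related_of_ne_zero i).symm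
    _ ≤ #{i | ∃ S ∈ A, r i S} • b := sum_le_card_nsmul _ _ _ fun i _ => hb i

end PooledDual

/-- From a D-feasible per-demand dual solution `(y, lam)` one obtains an HJ-feasible
solution `(ŷ, lam)` with `ŷ_S = ∑_{i : S ⊙ i} y_{i,S}`, of equal objective value. -/
theorem D_feasible_to_HJ_feasible
    {V : Type*} [Fintype V] [DecidableEq V]
    (E : Finset (Sym2 V)) (c : Sym2 V → ℝ) (hc : ∀ e ∈ E, 0 ≤ c e)
    (m : ℕ) (s t : Fin m → V)
    -- D-feasible dual solution
    (y : Fin m → Finset V → ℝ) (lam : ℝ) (hlam : 0 ≤ lam)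
    (hy : ∀ (i : Fin m) (S : Finset V), Separates (s i) (t i) S → 0 ≤ y i S)
    (hdual_edge : ∀ e ∈ E,
      ∑ i : Fin m, ∑ S ∈ univ.filter (fun S : Finset V =>
        InCut S e ∧ Separates (s i) (t i) S), y i S ≤ c e)
    (hdual_dem : ∀ i : Fin m,
      ∑ S ∈ univ.filter (fun S : Finset V => Separates (s i) (t i) S), y i S ≤ lam) :
    HJFeasible E c m s t
      (fun S => ∑ i ∈ univ.filter (fun i : Fin m => Separates (s i) (t i) S), y i S) lam ∧
    (∑ S : Finset V,
        ∑ i ∈ univ.filter (fun i : Fin m => Separates (s i) (t i) S), y i S)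
      = ∑ i : Fin m,
          ∑ S ∈ univ.filter (fun S : Finset V => Separates (s i) (t i) S), y i S := by
  refine ⟨⟨fun S => pooledDual_nonneg fun i => hy i S, hlam, fun e he => ?edge, fun 𝒮 => ?family⟩,
    sum_pooledDual y univ⟩
  case edge =>
    calc
      ∑ S with InCut S e, pooledDual (fun i => Separates (s i) (t i)) y S
          = ∑ i, ∑ S with InCut S e ∧ Separates (s i) (t i) S, y i S := by
        simp only [sum_pooledDual, filter_filter]
      _ ≤ c e := hdual_edge e he
  case family =>
    have sum_family_le (i : Fin m) : ∑ S ∈ 𝒮 with Separates (s i) (t i) S, y i S ≤ lam :=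
      calc
        ∑ S ∈ 𝒮 with Separates (s i) (t i) S, y i S
            ≤ ∑ S with Separates (s i) (t i) S, y i S :=
          sum_le_sum_of_subset_of_nonneg (filter_subset_filter _ (subset_univ 𝒮))
            fun S hS _ => hy i S (mem_filter_univ S |>.1 hS)
        _ ≤ lam := hdual_dem i
    rw [mul_comm, ← nsmul_eq_mul]
    exact sum_pooledDual_le_card_nsmul sum_family_le

end KForest3
end

section
/- Algebraic core of Lemma 4 (convex-combination dual bound): let ε ∈ (0,1] and m ≥ 1 be real numbers, and let OPT ≥ 0, λ₁ ≤ λ₂ with λ₁ ≥ 0 and λ₂ − λ₁ ≤ OPT/m², α₁, α₂ ≥ 0 with α₁ + α₂ = 1, and set λ* = α₁λ₁ + α₂λ₂. Let r₁, r₂ be reals with 0 ≤ r₁ ≤ m and r₂ ≥ 0, and let Y₁, Y₂, C₁, C₂ be reals with Y₁ ≥ r₁λ₁, Y₂ ≥ r₂λ₂, C₁ ≤ 2Y₁, C₂ ≤ 2Y₂. If OPT ≥ α₁·(Y₁ − (1−ε)·r₁·λ*) + α₂·(Y₂ − (1−ε)·r₂·λ*), then α₁·C₁ + α₂·C₂ ≤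 (4/ε)·OPT. -/
/-!
Let `lam* = α₁ * lam₁ + α₂ * lam₂`. Since `r₂ * lam₂ ≤ Y₂` and `lam* ≤ lam₂`, the second dual
solution pays for the penalties of its removed demands even at the rate `lam*`. The first one pays
for them up to an error `r₁ * (lam₂ - lam₁)`, which the stopping rule of the binary search bounds
by `OPT`. As only a `1 - ε` fraction of the penalties is subtracted in the weak-duality bound, an
`ε` fraction of the combined dual value survives, whence
`ε * (α₁ * Y₁ + α₂ * Y₂) ≤ OPT + OPT`.
-/

section OrderedRing

variable {R : Type*} [CommRing R] [PartialOrder R] [IsOrderedRing R]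

theorem mul_le_add_of_mul_sub_le {r lam lam' mu Y δ : R} (hr : 0 ≤ r) (hlam : lam ≤ lam')
    (hY : r * mu ≤ Y) (hδ : r * (lam' - mu) ≤ δ) : r * lam ≤ Y + δ :=
  calc r * lam ≤ r * lam' := mul_le_mul_of_nonneg_left hlam hr
    _ = r * mu + r * (lam' - mu) := by ring
    _ ≤ Y + δ := add_le_add hY hδ

theorem mul_le_sub_one_sub_mul_add {ε r lam Y δ : R} (hε : ε ≤ 1) (h : r * lam ≤ Y + δ) :
    ε * Y ≤ Y - (1 - ε) * r * lam + (1 - ε) * δ :=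
  calc ε * Y = Y - (1 - ε) * (Y + δ) + (1 - ε) * δ := by ring
    _ ≤ Y - (1 - ε) * (r * lam) + (1 - ε) * δ := by
      have : 0 ≤ 1 - ε := sub_nonneg.2 hε
      gcongr
    _ = Y - (1 - ε) * r * lam + (1 - ε) * δ := by ring

theorem mul_combo_le_add_of_combo_sub_le {ε α₁ α₂ r₁ r₂ Y₁ Y₂ δ₁ δ₂ lam B : R}
    (hε : ε ≤ 1) (hα₁ : 0 ≤ α₁) (hα₂ : 0 ≤ α₂)
    (h₁ : r₁ * lam ≤ Y₁ + δ₁) (h₂ : r₂ * lam ≤ Y₂ + δ₂)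
    (hB : α₁ * (Y₁ - (1 - ε) * r₁ * lam) + α₂ * (Y₂ - (1 - ε) * r₂ * lam) ≤ B) :
    ε * (α₁ * Y₁ + α₂ * Y₂) ≤ B + (1 - ε) * (α₁ * δ₁ + α₂ * δ₂) :=
  calc ε * (α₁ * Y₁ + α₂ * Y₂) = α₁ * (ε * Y₁) + α₂ * (ε * Y₂) := by ring
    _ ≤ α₁ * (Y₁ - (1 - ε) * r₁ * lam + (1 - ε) * δ₁)
        + α₂ * (Y₂ - (1 - ε) * r₂ * lam + (1 - ε) * δ₂) :=
      add_le_add (mul_le_mul_of_nonneg_left (mul_le_sub_one_sub_mul_add hε h₁) hα₁)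
        (mul_le_mul_of_nonneg_left (mul_le_sub_one_sub_mul_add hε h₂) hα₂)
    _ = α₁ * (Y₁ - (1 - ε) * r₁ * lam) + α₂ * (Y₂ - (1 - ε) * r₂ * lam)
        + (1 - ε) * (α₁ * δ₁ + α₂ * δ₂) := by ring
    _ ≤ B + (1 - ε) * (α₁ * δ₁ + α₂ * δ₂) := by gcongr

end OrderedRing

section OrderedField

variable {K : Type*} [Field K] [LinearOrder K] [IsStrictOrderedRing K]

theorem mul_le_of_le_div_pow {r m d B : K} {n : ℕ} (hn : n ≠ 0) (hm : 1 ≤ m) (hrm : r ≤ m)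
    (hd : 0 ≤ d) (hdB : d ≤ B / m ^ n) : r * d ≤ B :=
  calc r * d ≤ m ^ n * d := by
        have hrmn : r ≤ m ^ n := hrm.trans (le_self_pow₀ hm hn)
        gcongr
    _ ≤ B := (le_div_iff₀' (by positivity)).1 hdB

theorem kforest_convex_dual_bound_general {ε OPT lam₁ lam₂ α₁ α₂ r₁ r₂ Y₁ Y₂ C₁ C₂ : K}
    (hε0 : 0 < ε) (hε1 : ε ≤ 1) (hlam : lam₁ ≤ lam₂) (hgap : r₁ * (lam₂ - lam₁) ≤ OPT)
    (hα₁ : 0 ≤ α₁) (hα₂ : 0 ≤ α₂) (hsum : α₁ + α₂ = 1) (hr₁ : 0 ≤ r₁) (hr₂ : 0 ≤ r₂)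
    (hY₁ : r₁ * lam₁ ≤ Y₁) (hY₂ : r₂ * lam₂ ≤ Y₂) (hC₁ : C₁ ≤ 2 * Y₁) (hC₂ : C₂ ≤ 2 * Y₂)
    (hdual : α₁ * (Y₁ - (1 - ε) * r₁ * (α₁ * lam₁ + α₂ * lam₂))
           + α₂ * (Y₂ - (1 - ε) * r₂ * (α₁ * lam₁ + α₂ * lam₂)) ≤ OPT) :
    α₁ * C₁ + α₂ * C₂ ≤ (4 / ε) * OPT := by
  have hOPT : 0 ≤ OPT := (mul_nonneg hr₁ (sub_nonneg.2 hlam)).trans hgap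
  have hstar : α₁ * lam₁ + α₂ * lam₂ ≤ lam₂ := by
    simpa only [smul_eq_mul, max_eq_right hlam] using
      Convex.combo_le_max lam₁ lam₂ hα₁ hα₂ hsum
  have hpay₁ := mul_le_add_of_mul_sub_le hr₁ hstar hY₁ hgap
  have hpay₂ := mul_le_add_of_mul_sub_le (δ := 0) hr₂ hstar hY₂ (by simp)
  have hslack : (1 - ε) * (α₁ * OPT + α₂ * 0) ≤ OPT := by
    have hfactor : (1 - ε) * α₁ ≤ 1 := mul_le_one₀ (by linarith) hα₁ (by linarith)
    simpa only [mul_zero, add_zero, mul_assoc] using mul_le_of_le_one_left hOPT hfactor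
  have hY : ε * (α₁ * Y₁ + α₂ * Y₂) ≤ 2 * OPT := by
    linarith [mul_combo_le_add_of_combo_sub_le hε1 hα₁ hα₂ hpay₁ hpay₂ hdual]
  calc α₁ * C₁ + α₂ * C₂ ≤ α₁ * (2 * Y₁) + α₂ * (2 * Y₂) := by gcongr
    _ = 2 * (α₁ * Y₁ + α₂ * Y₂) := by ring
    _ ≤ 2 * (2 * OPT / ε) := by
      gcongr
      exact (le_div_iff₀' hε0).2 hY
    _ = (4 / ε) * OPT := by ring

end OrderedField

/-- Algebraic core of Lemma 4 (convex-combination dual bound): from the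
weak-duality bound for the convex combination `(y*, λ*) = α₁(y(λ₁),λ₁) + α₂(y(λ₂),λ₂)`
of the two HJ dual solutions produced at the final penalties of the binary search,
one gets `α₁·C₁ + α₂·C₂ ≤ (4/ε)·OPT`. -/
theorem kforest_convex_dual_bound
    (ε m OPT lam₁ lam₂ α₁ α₂ r₁ r₂ Y₁ Y₂ C₁ C₂ : ℝ)
    (hε0 : 0 < ε) (hε1 : ε ≤ 1) (hm : 1 ≤ m) (hOPT : 0 ≤ OPT)
    (hlam : lam₁ ≤ lam₂) (hlam₁ : 0 ≤ lam₁) (hgap : lam₂ - lam₁ ≤ OPT / m ^ 2)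
    (hα₁ : 0 ≤ α₁) (hα₂ : 0 ≤ α₂) (hsum : α₁ + α₂ = 1)
    (hr₁0 : 0 ≤ r₁) (hr₁m : r₁ ≤ m) (hr₂0 : 0 ≤ r₂)
    (hY₁ : r₁ * lam₁ ≤ Y₁) (hY₂ : r₂ * lam₂ ≤ Y₂)
    (hC₁ : C₁ ≤ 2 * Y₁) (hC₂ : C₂ ≤ 2 * Y₂)
    (hdual : α₁ * (Y₁ - (1 - ε) * r₁ * (α₁ * lam₁ + α₂ * lam₂))
           + α₂ * (Y₂ - (1 - ε) * r₂ * (α₁ * lam₁ + α₂ * lam₂)) ≤ OPT) :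
    α₁ * C₁ + α₂ * C₂ ≤ (4 / ε) * OPT :=
  kforest_convex_dual_bound_general hε0 hε1 hlam
    (mul_le_of_le_div_pow two_ne_zero hm hr₁m (sub_nonneg.2 hlam) hgap)
    hα₁ hα₂ hsum hr₁0 hr₂0 hY₁ hY₂ hC₁ hC₂ hdual
end

section
/- Correctness of the case analysis in Step 3 of the algorithm: let ε be a real with 0 < ε ≤ 1/2, M > 0 a real, r = (1−ε)·M, and let r₁, r₂ be reals with 0 ≤ r₂ < r < r₁. Define α₁ = (r − r₂)/(r₁ − r₂) and α₂ = (r₁ − r)/(r₁ − r₂). Let OPT ≥ 0 and C₁, C₂ ≥ 0 be reals with α₁·C₁ + α₂·C₂ ≤ (4/ε)·OPT. Then: (i) if α₂ ≥ ε, then C₂ ≤ (4/ε²)·OPT and r₂ ≤ M; (ii) if α₂ < ε, then C₁ ≤ (4/ε²)·OPT and r₁ ≤ M. -/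
/-!
The target is the average `r = α₁ * r₁ + α₂ * r₂` with `α₁ + α₂ = 1`. In a convex combination of
nonnegative numbers, a term of weight at least `c` is at most `1 / c` times the total. If `α₂ < ε`,
then `α₁ > 1 - ε ≥ ε`, so this applies to the costs with `c = ε` and to the numbers of removed
demands with `c = 1 - ε`, where the total is `r = (1 - ε) * M`.
-/

section Field

variable {𝕜 : Type*} [Field 𝕜] {a b : 𝕜}

lemma sub_div_sub_add_sub_div_sub_eq_one (hab : a ≠ b) (x : 𝕜) :
    (x - b) / (a - b) + (a - x) / (a - b) = 1 := by
  rw [← add_div, add_comm, sub_add_sub_cancel, div_self (sub_ne_zero.2 hab)]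

lemma sub_div_sub_mul_add_sub_div_sub_mul_eq (hab : a ≠ b) (x : 𝕜) :
    (x - b) / (a - b) * a + (a - x) / (a - b) * b = x := by
  have hsub : a - b ≠ 0 := sub_ne_zero.2 hab
  field_simp
  ring

end Field

section LinearOrderedField

variable {𝕜 : Type*} [Field 𝕜] [LinearOrder 𝕜] [IsStrictOrderedRing 𝕜]

lemma le_div_of_mul_add_mul_le {a b c x y B : 𝕜} (hc : 0 < c) (hca : c ≤ a) (hb : 0 ≤ b)
    (hx : 0 ≤ x) (hy : 0 ≤ y) (h : a * x + b * y ≤ B) : x ≤ B / c := by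
  rw [le_div_iff₀' hc]
  calc
    c * x ≤ a * x := mul_le_mul_of_nonneg_right hca hx
    _ ≤ a * x + b * y := le_add_of_nonneg_right (mul_nonneg hb hy)
    _ ≤ B := h

theorem kforest_step3_case_analysis_general {ε M r r₁ r₂ OPT C₁ C₂ : 𝕜}
    (hε0 : 0 < ε) (hε1 : ε ≤ 1 / 2) (hr : r = (1 - ε) * M)
    (hr₂0 : 0 ≤ r₂) (h₂ : r₂ < r) (h₁ : r < r₁) (hC₁ : 0 ≤ C₁) (hC₂ : 0 ≤ C₂)
    (hbound : ((r - r₂) / (r₁ - r₂)) * C₁ + ((r₁ - r) / (r₁ - r₂)) * C₂ ≤ (4 / ε) * OPT) :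
    (ε ≤ (r₁ - r) / (r₁ - r₂) → C₂ ≤ (4 / ε ^ 2) * OPT ∧ r₂ ≤ M) ∧
    ((r₁ - r) / (r₁ - r₂) < ε → C₁ ≤ (4 / ε ^ 2) * OPT ∧ r₁ ≤ M) := by
  have hlt : r₂ < r₁ := h₂.trans h₁
  have hα₁ : 0 ≤ (r - r₂) / (r₁ - r₂) := div_nonneg (sub_nonneg.2 h₂.le) (sub_nonneg.2 hlt.le)
  have hα₂ : 0 ≤ (r₁ - r) / (r₁ - r₂) := div_nonneg (sub_nonneg.2 h₁.le) (sub_nonneg.2 hlt.le)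
  have hsum := sub_div_sub_add_sub_div_sub_eq_one hlt.ne' r
  have hmean := sub_div_sub_mul_add_sub_div_sub_mul_eq hlt.ne' r
  have hε : 0 < 1 - ε := by linarith
  have hM : M = r / (1 - ε) := by rw [hr, mul_div_cancel_left₀ M hε.ne']
  have hcost : 4 / ε ^ 2 * OPT = 4 / ε * OPT / ε := by ring
  rw [hM, hcost]
  refine ⟨fun hα₂ε ↦ ⟨?_, ?_⟩, fun hα₂ε ↦ ⟨?_, ?_⟩⟩
  · exact le_div_of_mul_add_mul_le hε0 hα₂ε hα₁ hC₂ hC₁ (by rwa [add_comm])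
  · exact h₂.le.trans (le_div_self (hr₂0.trans h₂.le) hε (by linarith))
  · exact le_div_of_mul_add_mul_le hε0 (by linarith) hα₂ hC₁ hC₂ hbound
  · exact le_div_of_mul_add_mul_le hε (by linarith) hα₂ (hr₂0.trans hlt.le) hr₂0 hmean.le

end LinearOrderedField

/-- Correctness of the case analysis in Step 3 of the `k`-forest algorithm:
depending on whether `α₂ ≥ ε` or not, the returned solution removes at most
`M` demands and has cost at most `(4/ε²)·OPT`. -/
theorem kforest_step3_case_analysis
    (ε M r r₁ r₂ OPT C₁ C₂ : ℝ)
    (hε0 : 0 < ε) (hε1 : ε ≤ 1 / 2) (hM : 0 < M) (hr : r = (1 - ε) * M)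
    (hr₂0 : 0 ≤ r₂) (h₂ : r₂ < r) (h₁ : r < r₁)
    (hOPT : 0 ≤ OPT) (hC₁ : 0 ≤ C₁) (hC₂ : 0 ≤ C₂)
    (hbound : ((r - r₂) / (r₁ - r₂)) * C₁ + ((r₁ - r) / (r₁ - r₂)) * C₂
      ≤ (4 / ε) * OPT) :
    (ε ≤ (r₁ - r) / (r₁ - r₂) → C₂ ≤ (4 / ε ^ 2) * OPT ∧ r₂ ≤ M) ∧
    ((r₁ - r) / (r₁ - r₂) < ε → C₁ ≤ (4 / ε ^ 2) * OPT ∧ r₁ ≤ M) :=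
  kforest_step3_case_analysis_general hε0 hε1 hr hr₂0 h₂ h₁ hC₁ hC₂ hbound
end
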